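/- Let G_n, n ≥ 2, be the random graphs of Construction 1 built from distributions ν_n, with D_n = |S_n|, and suppose D_n/n converges in distribution to a probability measure ν on [0,1] as n → ∞. Then for every finite simple graph F with vertex set {1,…,m}, E[t(F, G_n)] → t_F as n → ∞, where t_F = (1/m!) Σ_σ ∏_{j=1}^m M_{d_j(F_σ)}, the sum being over all permutations σ of {1,…,m}. -/

import Mathlib

open MeasureTheory Filter
open scoped ENNReal

instance (n : ℕ) : MeasurableSpace (Finset (Fin n)) := ⊤

/-- The law of the random neighbourhood set `S_v ⊆ {i : i < v}` of vertex `v` in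
Construction 1: `P(S_v = A) = q_v(|A|) / C(v, |A|)` for `A ⊆ {i : i < v}` (`v` has `v`
predecessors since vertices are 0-indexed; `q v` is the indegree distribution of `v`,
supported on `{0,…,v}`). -/
noncomputable def nbhdMeasure (n : ℕ) (q : ℕ → ℕ → ℝ≥0∞) (v : Fin n) :
    Measure (Finset (Fin n)) :=
  ∑ A : Finset (Fin n),
    (if A ⊆ Finset.Iio v then q v A.card / ((v : ℕ).choose A.card : ℝ≥0∞) else 0) •
      Measure.dirac A

/-- The joint law of the independent random sets `S_v`, `v` a vertex of `G_n`. -/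
noncomputable def con1Measure (n : ℕ) (q : ℕ → ℕ → ℝ≥0∞) :
    Measure (Fin n → Finset (Fin n)) :=
  Measure.pi fun v => nbhdMeasure n q v

/-- The graph `G_n` of Construction 1: for `i < k`, the edge `{i,k}` is present
iff `i ∈ S_k`. -/
def graphOf {n : ℕ} (ω : Fin n → Finset (Fin n)) : SimpleGraph (Fin n) where
  Adj i j := (i < j ∧ i ∈ ω j) ∨ (j < i ∧ j ∈ ω i)
  symm := ⟨fun _ _ h => h.symm⟩
  loopless := ⟨fun i h => by rcases h with ⟨h, -⟩ | ⟨h, -⟩ <;> exact absurd h (lt_irrefl i)⟩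

/-- `F_σ`: the graph `F` with vertices relabelled by `i ↦ σ i`. -/
def relabel {m : ℕ} (σ : Equiv.Perm (Fin m)) (F : SimpleGraph (Fin m)) : SimpleGraph (Fin m) where
  Adj i j := F.Adj (σ.symm i) (σ.symm j)
  symm := ⟨fun _ _ h => F.symm.symm _ _ h⟩
  loopless := ⟨fun _ h => F.loopless.irrefl _ h⟩

/-- `d_j(F) = #{i < j : {i,j} ∈ E(F)}`, the indegree of `j` when edges are directed
towards the larger endpoint. -/
noncomputable def indeg {m : ℕ} (F : SimpleGraph (Fin m)) (j : Fin m) : ℕ :=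
  Nat.card {i : Fin m // i < j ∧ F.Adj i j}

/-- `n_≤(F,G)`: the number of strictly increasing homomorphisms `F → G`. -/
noncomputable def incHomCount {m n : ℕ} (F : SimpleGraph (Fin m)) (G : SimpleGraph (Fin n)) : ℕ :=
  Nat.card {φ : Fin m → Fin n // StrictMono φ ∧ ∀ i j, F.Adj i j → G.Adj (φ i) (φ j)}


/-- `n(F,G)`: the number of homomorphisms `F → G`. -/
noncomputable def homCount {m n : ℕ} (F : SimpleGraph (Fin m)) (G : SimpleGraph (Fin n)) : ℕ :=
  Nat.card {φ : Fin m → Fin n // ∀ i j, F.Adj i j → G.Adj (φ i) (φ j)}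

instance instDiscreteFinsetFin (n : ℕ) : DiscreteMeasurableSpace (Finset (Fin n)) :=
  ⟨fun _ => trivial⟩

lemma abs_prod_diff {ι : Type*} (s : Finset ι) (a b : ι → ℝ)
    (ha : ∀ i ∈ s, 0 ≤ a i ∧ a i ≤ 1) (hb : ∀ i ∈ s, 0 ≤ b i ∧ b i ≤ 1) :
    |∏ i ∈ s, a i - ∏ i ∈ s, b i| ≤ ∑ i ∈ s, |a i - b i| := by
  classical
  induction s using Finset.induction_on with
  | empty => simp
  | insert i s hi ih =>
    rw [Finset.prod_insert hi, Finset.prod_insert hi, Finset.sum_insert hi]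
    have h1 := ih (fun j hj => ha j (Finset.mem_insert_of_mem hj))
      (fun j hj => hb j (Finset.mem_insert_of_mem hj))
    have hai := ha i (Finset.mem_insert_self _ _)
    have hbi := hb i (Finset.mem_insert_self _ _)
    have hP0 : 0 ≤ ∏ i ∈ s, b i := Finset.prod_nonneg
      (fun j hj => (hb j (Finset.mem_insert_of_mem hj)).1)
    have hP1 : ∏ i ∈ s, b i ≤ 1 := Finset.prod_le_one
      (fun j hj => (hb j (Finset.mem_insert_of_mem hj)).1)
      (fun j hj => (hb j (Finset.mem_insert_of_mem hj)).2)
    have : a i * ∏ i ∈ s, a i - b i * ∏ i ∈ s, b i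
        = a i * (∏ i ∈ s, a i - ∏ i ∈ s, b i) + (a i - b i) * ∏ i ∈ s, b i := by ring
    rw [this]
    refine (abs_add_le _ _).trans ?_
    rw [abs_mul, abs_mul, abs_of_nonneg hai.1, abs_of_nonneg hP0]
    have e1 : a i * |∏ i ∈ s, a i - ∏ i ∈ s, b i| ≤ |∏ i ∈ s, a i - ∏ i ∈ s, b i| :=
      mul_le_of_le_one_left (abs_nonneg _) hai.2
    have e2 : |a i - b i| * ∏ i ∈ s, b i ≤ |a i - b i| :=
      mul_le_of_le_one_right (abs_nonneg _) hP1
    linarith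

lemma nbhd_formula (n : ℕ) (q : ℕ → ℕ → ℝ≥0∞) (v : Fin n) (B : Finset (Fin n))
    (hB : B ⊆ Finset.Iio v) :
    nbhdMeasure n q v {A | B ⊆ A} =
      ∑ k ∈ Finset.range ((v : ℕ) + 1),
        q v k * ((k.choose B.card : ℝ≥0∞) / ((v : ℕ).choose B.card : ℝ≥0∞)) := by
  classical
  have hd : B.card ≤ (v : ℕ) := by
    have := Finset.card_le_card hB
    simpa using this
  set d := B.card with hdd
  have h1 : nbhdMeasure n q v {A | B ⊆ A} =
      ∑ A ∈ Finset.Icc B (Finset.Iio v), q v A.card / ((v : ℕ).choose A.card : ℝ≥0∞) := by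
    unfold nbhdMeasure
    rw [Measure.finsetSum_apply]
    have : Finset.Icc B (Finset.Iio v) = Finset.univ.filter
        (fun A : Finset (Fin n) => B ⊆ A ∧ A ⊆ Finset.Iio v) := by
      ext A; simp
    rw [this, Finset.sum_filter]
    refine Finset.sum_congr rfl fun A _ => ?_
    by_cases h1 : B ⊆ A <;> by_cases h2 : A ⊆ Finset.Iio v <;> simp [h1, h2]
  rw [h1, Finset.Icc_eq_image_powerset hB, Finset.sum_image]
  · have h2 : ∀ C ∈ (Finset.Iio v \ B).powerset,
        q v (B ∪ C).card / ((v : ℕ).choose (B ∪ C).card : ℝ≥0∞)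
          = (fun j => q v (d + j) / ((v : ℕ).choose (d + j) : ℝ≥0∞)) C.card := by
      intro C hC
      have : Disjoint B C := by
        rw [Finset.mem_powerset] at hC
        exact Finset.disjoint_of_subset_right hC Finset.disjoint_sdiff
      simp only [Finset.card_union_of_disjoint this, ← hdd]
    rw [Finset.sum_congr rfl h2, Finset.sum_powerset_apply_card
      (fun j => q v (d + j) / ((v : ℕ).choose (d + j) : ℝ≥0∞))]
    have hc : (Finset.Iio v \ B).card = v - d := by
      rw [Finset.card_sdiff_of_subset hB]; simp [hdd]
    rw [hc, show (v : ℕ) + 1 = d + (v - d + 1) by omega,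
      Finset.sum_range_add (fun k => q v k * ((k.choose d : ℝ≥0∞) / ((v : ℕ).choose d : ℝ≥0∞)))]
    have hz : ∑ k ∈ Finset.range d,
        q v k * ((k.choose d : ℝ≥0∞) / ((v : ℕ).choose d : ℝ≥0∞)) = 0 := by
      refine Finset.sum_eq_zero fun k hk => ?_
      rw [Nat.choose_eq_zero_of_lt (Finset.mem_range.1 hk)]; simp
    rw [hz, zero_add]
    refine Finset.sum_congr rfl fun j hj => ?_
    have hj' : d + j ≤ v := by have := Finset.mem_range.1 hj; omega
    have hm := Nat.choose_mul (n := v) (k := d + j) (s := d) (by omega)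
    rw [Nat.add_sub_cancel_left] at hm
    have hp1 : ((v : ℕ).choose (d + j) : ℝ≥0∞) ≠ 0 := by
      exact_mod_cast (Nat.choose_pos hj').ne'
    have hp2 : ((v : ℕ).choose d : ℝ≥0∞) ≠ 0 := by
      exact_mod_cast (Nat.choose_pos hd).ne'
    have hm' : ((v : ℕ).choose (d + j) : ℝ≥0∞) * ((d + j).choose d : ℝ≥0∞)
        = ((v : ℕ).choose d : ℝ≥0∞) * (((v : ℕ) - d).choose j : ℝ≥0∞) := by
      exact_mod_cast hm
    have key : (((v : ℕ) - d).choose j : ℝ≥0∞) / ((v : ℕ).choose (d + j) : ℝ≥0∞)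
        = ((d + j).choose d : ℝ≥0∞) / ((v : ℕ).choose d : ℝ≥0∞) := by
      rw [ENNReal.div_eq_div_iff hp2 (ENNReal.natCast_ne_top _) hp1 (ENNReal.natCast_ne_top _)]
      exact hm'.symm
    rw [← key, nsmul_eq_mul]
    simp only [div_eq_mul_inv]; ring
  · intro C hC D hD h
    simp only [Finset.coe_powerset, Set.mem_preimage, Set.mem_powerset_iff, Finset.coe_subset] at hC hD
    have e : ∀ C, C ⊆ Finset.Iio v \ B → (B ∪ C) \ B = C := by
      intro C hC
      ext x
      have := @hC x
      simp at this ⊢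
      grind
    have h' : B ∪ C = B ∪ D := h
    rw [← e C hC, ← e D hD, h']

/-- p -/
noncomputable def pp (q : ℕ → ℕ → ℝ≥0∞) (d v : ℕ) : ℝ :=
  ∑ k ∈ Finset.range (v + 1), (q v k).toReal * ((k.choose d : ℝ) / (v.choose d : ℝ))

lemma q_ne_top (q : ℕ → ℕ → ℝ≥0∞)
    (hq1 : ∀ v : ℕ, ∑ d ∈ Finset.range (v + 1), q v d = 1)
    (v k : ℕ) (hk : k ∈ Finset.range (v + 1)) : q v k ≠ ∞ := by
  have : q v k ≤ 1 := by
    rw [← hq1 v]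
    exact Finset.single_le_sum (f := fun d => q v d) (fun _ _ => zero_le) hk
  exact ne_top_of_le_ne_top ENNReal.one_ne_top this

lemma q_sum_real (q : ℕ → ℕ → ℝ≥0∞)
    (hq1 : ∀ v : ℕ, ∑ d ∈ Finset.range (v + 1), q v d = 1) (v : ℕ) :
    ∑ k ∈ Finset.range (v + 1), (q v k).toReal = 1 := by
  rw [← ENNReal.toReal_sum (fun k hk => q_ne_top q hq1 v k hk), hq1]; simp

lemma pp_nonneg (q : ℕ → ℕ → ℝ≥0∞) (d v : ℕ) : 0 ≤ pp q d v :=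
  Finset.sum_nonneg fun k _ => by positivity

lemma pp_le_one (q : ℕ → ℕ → ℝ≥0∞)
    (hq1 : ∀ v : ℕ, ∑ d ∈ Finset.range (v + 1), q v d = 1) (d v : ℕ) : pp q d v ≤ 1 := by
  rw [← q_sum_real q hq1 v]
  refine Finset.sum_le_sum fun k hk => ?_
  refine mul_le_of_le_one_right ENNReal.toReal_nonneg ?_
  refine div_le_one_of_le₀ ?_ (by positivity)
  exact_mod_cast Nat.choose_le_choose d (by have := Finset.mem_range.1 hk; omega)

lemma pp_zero (q : ℕ → ℕ → ℝ≥0∞)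
    (hq1 : ∀ v : ℕ, ∑ d ∈ Finset.range (v + 1), q v d = 1) (v : ℕ) : pp q 0 v = 1 := by
  rw [← q_sum_real q hq1 v]
  simp [pp]

lemma nbhd_prob (q : ℕ → ℕ → ℝ≥0∞)
    (hq1 : ∀ v : ℕ, ∑ d ∈ Finset.range (v + 1), q v d = 1) (n : ℕ) (v : Fin n) :
    IsProbabilityMeasure (nbhdMeasure n q v) := by
  constructor
  have := nbhd_formula n q v ∅ (by simp)
  simp [hq1] at this
  exact this

lemma nbhd_real (q : ℕ → ℕ → ℝ≥0∞)
    (hq1 : ∀ v : ℕ, ∑ d ∈ Finset.range (v + 1), q v d = 1) (n : ℕ) (v : Fin n)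
    (B : Finset (Fin n)) (hB : B ⊆ Finset.Iio v) :
    (nbhdMeasure n q v {A | B ⊆ A}).toReal = pp q B.card v := by
  have hd : B.card ≤ (v : ℕ) := by
    have := Finset.card_le_card hB
    simpa using this
  rw [nbhd_formula n q v B hB, ENNReal.toReal_sum]
  · simp [pp]
  · intro k hk
    refine ENNReal.mul_ne_top (q_ne_top q hq1 v k hk) (ENNReal.div_ne_top (ENNReal.natCast_ne_top _) ?_)
    exact_mod_cast (Nat.choose_pos hd).ne'

lemma ratio_bound (d k v : ℕ) (hk : k ≤ v) (hv : d < v) :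
    |(k.choose d : ℝ) / (v.choose d : ℝ) - ((k : ℝ) / ((v + 1 : ℕ) : ℝ)) ^ d|
      ≤ d * ((d + 1) / ((v : ℝ) - d)) := by
  have hvd : (0 : ℝ) < (v : ℝ) - d := by
    have : (d : ℝ) < v := by exact_mod_cast hv
    linarith
  have h1 : (k.choose d : ℝ) / (v.choose d : ℝ)
      = ∏ i ∈ Finset.range d, (((k - i : ℕ) : ℝ) / ((v - i : ℕ) : ℝ)) := by
    rw [Finset.prod_div_distrib, ← Nat.cast_prod, ← Nat.cast_prod,
      ← Nat.descFactorial_eq_prod_range, ← Nat.descFactorial_eq_prod_range,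
      Nat.descFactorial_eq_factorial_mul_choose, Nat.descFactorial_eq_factorial_mul_choose]
    push_cast
    rw [mul_div_mul_left]
    exact_mod_cast (Nat.factorial_pos d).ne'
  have h2 : ((k : ℝ) / ((v + 1 : ℕ) : ℝ)) ^ d
      = ∏ i ∈ Finset.range d, ((k : ℝ) / ((v + 1 : ℕ) : ℝ)) := by
    rw [Finset.prod_const, Finset.card_range]
  rw [h1, h2]
  refine (abs_prod_diff _ _ _ ?_ ?_).trans ?_
  · intro i hi
    refine ⟨by positivity, div_le_one_of_le₀ ?_ (by positivity)⟩
    exact_mod_cast Nat.sub_le_sub_right hk i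
  · intro i hi
    refine ⟨by positivity, div_le_one_of_le₀ ?_ (by positivity)⟩
    exact_mod_cast (by omega : k ≤ v + 1)
  · refine (Finset.sum_le_card_nsmul _ _ ((d + 1) / ((v : ℝ) - d)) ?_).trans ?_
    · intro i hi
      have hi' := Finset.mem_range.1 hi
      have hid : (i : ℝ) ≤ d := by exact_mod_cast hi'.le
      have hkv : (k : ℝ) ≤ v := by exact_mod_cast hk
      have hvi : (0 : ℝ) < (v : ℝ) - i := by linarith
      have hi0 : (0 : ℝ) ≤ i := by positivity
      have hk0 : (0 : ℝ) ≤ k := by positivity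
      have hv1 : (0 : ℝ) < (v : ℝ) + 1 := by positivity
      rw [Nat.cast_sub (by omega : i ≤ v)]
      push_cast
      have hb : ((i : ℝ) + 1) / ((v : ℝ) - i) ≤ (d + 1) / ((v : ℝ) - d) := by
        gcongr
      refine le_trans ?_ hb
      rcases le_total i k with h | h
      · rw [Nat.cast_sub h, div_sub_div _ _ hvi.ne' hv1.ne', abs_div,
          abs_of_pos (mul_pos hvi hv1), div_le_div_iff₀ (mul_pos hvi hv1) hvi]
        have : |((k : ℝ) - i) * (v + 1) - (v - i) * k| ≤ (i + 1) * (v + 1) := by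
          rw [abs_le]
          constructor <;> nlinarith
        nlinarith
      · have hki : (k : ℝ) ≤ i := by exact_mod_cast h
        rw [Nat.sub_eq_zero_of_le h]
        simp only [Nat.cast_zero, zero_div, zero_sub, abs_neg]
        rw [abs_of_nonneg (by positivity)]
        apply div_le_div₀ <;> linarith
    · simp

lemma pp_tendsto (ν : Measure ℝ) [IsProbabilityMeasure ν] (hν : ν (Set.Icc 0 1) = 1)
    (q : ℕ → ℕ → ℝ≥0∞)
    (hq1 : ∀ v : ℕ, ∑ d ∈ Finset.range (v + 1), q v d = 1)
    (hconv : ∀ f : BoundedContinuousFunction ℝ ℝ,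
      Tendsto (fun k => ∑ d ∈ Finset.range k, (q (k - 1) d).toReal * f ((d : ℝ) / k))
        atTop (nhds (∫ x, f x ∂ν))) (d : ℕ) :
    Tendsto (fun v => pp q d v) atTop (nhds (∫ x, x ^ d ∂ν)) := by
  let f : BoundedContinuousFunction ℝ ℝ :=
    BoundedContinuousFunction.ofNormedAddCommGroup (fun x => (max 0 (min x 1)) ^ d)
      (by fun_prop) 1 (by
        intro x
        rw [Real.norm_eq_abs, abs_pow]
        refine pow_le_one₀ (abs_nonneg _) ?_
        rw [abs_of_nonneg (le_max_left _ _)]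
        exact max_le zero_le_one (min_le_right _ _))
  have hf : ∀ x ∈ Set.Icc (0 : ℝ) 1, f x = x ^ d := by
    intro x hx
    change (max 0 (min x 1)) ^ d = x ^ d
    rw [min_eq_left hx.2, max_eq_right hx.1]
  have hae : ∀ᵐ x ∂ν, x ∈ Set.Icc (0 : ℝ) 1 :=
    (prob_compl_eq_zero_iff measurableSet_Icc).2 hν
  have hint : ∫ x, f x ∂ν = ∫ x, x ^ d ∂ν :=
    integral_congr_ae (hae.mono hf)
  have h1 := (hconv f).comp (tendsto_add_atTop_nat 1)
  rw [hint] at h1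
  have h2 : Tendsto (fun v : ℕ => (d : ℝ) * ((d + 1) / ((v : ℝ) - d))) atTop (nhds 0) := by
    have : Tendsto (fun v : ℕ => (v : ℝ) - d) atTop atTop :=
      tendsto_atTop_add_const_right _ _ tendsto_natCast_atTop_atTop
    simpa using (this.const_div_atTop ((d : ℝ) + 1)).const_mul (d : ℝ)
  have h3 : Tendsto (fun v => pp q d v -
      ∑ k ∈ Finset.range (v + 1), (q v k).toReal * f ((k : ℝ) / ((v + 1 : ℕ) : ℝ)))
      atTop (nhds 0) := by
    refine squeeze_zero_norm' ?_ h2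
    filter_upwards [eventually_gt_atTop d] with v hv
    rw [pp, ← Finset.sum_sub_distrib, Real.norm_eq_abs]
    refine (Finset.abs_sum_le_sum_abs _ _).trans ?_
    have : (d : ℝ) * ((d + 1) / ((v : ℝ) - d)) = ∑ k ∈ Finset.range (v + 1),
        (q v k).toReal * ((d : ℝ) * ((d + 1) / ((v : ℝ) - d))) := by
      rw [← Finset.sum_mul, q_sum_real q hq1, one_mul]
    rw [this]
    refine Finset.sum_le_sum fun k hk => ?_
    have hk' : k ≤ v := by have := Finset.mem_range.1 hk; omega
    rw [← mul_sub, abs_mul, abs_of_nonneg ENNReal.toReal_nonneg]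
    refine mul_le_mul_of_nonneg_left ?_ ENNReal.toReal_nonneg
    rw [hf]
    · exact ratio_bound d k v hk' hv
    · refine ⟨by positivity, div_le_one_of_le₀ ?_ (by positivity)⟩
      exact_mod_cast (by omega : k ≤ v + 1)
  have h4 := h3.add h1
  simpa using h4

open Classical in
/-- local indegree -/
noncomputable def dd {m n : ℕ} (F : SimpleGraph (Fin m)) (φ : Fin m → Fin n) (j : Fin m) : ℕ :=
  (Finset.univ.filter (fun i => φ i < φ j ∧ F.Adj i j)).card

lemma dd_le {m n : ℕ} (F : SimpleGraph (Fin m)) (φ : Fin m → Fin n) (j : Fin m) :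
    dd F φ j ≤ m := by
  unfold dd
  exact (Finset.card_le_univ _).trans (by simp)

lemma hom_prob (q : ℕ → ℕ → ℝ≥0∞)
    (hq1 : ∀ v : ℕ, ∑ d ∈ Finset.range (v + 1), q v d = 1) {m n : ℕ}
    (F : SimpleGraph (Fin m)) (φ : Fin m → Fin n) (hφ : Function.Injective φ) :
    (con1Measure n q).real {ω | ∀ i j, F.Adj i j → (graphOf ω).Adj (φ i) (φ j)}
      = ∏ j, pp q (dd F φ j) (φ j) := by
  classical
  have := fun v => nbhd_prob q hq1 n v
  let B : Fin n → Finset (Fin n) := fun v =>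
    (Finset.univ.filter (fun i => φ i < v ∧ ∃ j, φ j = v ∧ F.Adj i j)).image φ
  have hB : ∀ v, B v ⊆ Finset.Iio v := by
    intro v x hx
    simp only [B, Finset.mem_image, Finset.mem_filter] at hx
    obtain ⟨i, ⟨_, h, _⟩, rfl⟩ := hx
    simpa using h
  have hset : {ω : Fin n → Finset (Fin n) | ∀ i j, F.Adj i j → (graphOf ω).Adj (φ i) (φ j)}
      = Set.univ.pi (fun v => {A | B v ⊆ A}) := by
    ext ω
    simp only [Set.mem_ofPred_eq, Set.mem_pi, Set.mem_univ, true_imp_iff]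
    constructor
    · intro h v x hx
      simp only [B, Finset.mem_image, Finset.mem_filter] at hx
      obtain ⟨i, ⟨_, hlt, j, rfl, hadj⟩, rfl⟩ := hx
      rcases h i j hadj with h1 | h1
      · exact h1.2
      · exact absurd h1.1 (not_lt.2 hlt.le)
    · intro h i j hadj
      have hne : φ i ≠ φ j := fun e => hadj.ne (hφ e)
      rcases lt_or_gt_of_ne hne with hlt | hlt
      · left
        refine ⟨hlt, h _ ?_⟩
        simp only [B, Finset.mem_image, Finset.mem_filter]
        exact ⟨i, ⟨Finset.mem_univ _, hlt, j, rfl, hadj⟩, rfl⟩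
      · right
        refine ⟨hlt, h _ ?_⟩
        simp only [B, Finset.mem_image, Finset.mem_filter]
        exact ⟨j, ⟨Finset.mem_univ _, hlt, i, rfl, hadj.symm⟩, rfl⟩
  rw [hset, con1Measure, measureReal_def, Measure.pi_pi, ENNReal.toReal_prod]
  symm
  apply Fintype.prod_of_injective φ hφ
  · intro v hv
    have : B v = ∅ := by
      simp only [B, Finset.image_eq_empty, Finset.filter_eq_empty_iff]
      rintro i - ⟨-, j, hj, -⟩
      exact hv ⟨j, hj⟩
    rw [nbhd_real q hq1 n v _ (hB v), this, Finset.card_empty, pp_zero q hq1]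
  · intro j
    rw [nbhd_real q hq1 n _ _ (hB _)]
    congr 1
    simp only [B]
    rw [Finset.card_image_of_injective _ hφ, dd]
    congr 1
    ext i
    simp only [Finset.mem_filter, Finset.mem_univ, true_and]
    constructor
    · rintro ⟨h1, h2⟩
      exact ⟨h1, j, rfl, h2⟩
    · rintro ⟨h1, j', h2, h3⟩
      rw [hφ h2] at h3
      exact ⟨h1, h3⟩

lemma con1_prob (q : ℕ → ℕ → ℝ≥0∞)
    (hq1 : ∀ v : ℕ, ∑ d ∈ Finset.range (v + 1), q v d = 1) (n : ℕ) :
    IsProbabilityMeasure (con1Measure n q) := by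
  have := fun v => nbhd_prob q hq1 n v
  unfold con1Measure
  infer_instance

lemma integral_eq (q : ℕ → ℕ → ℝ≥0∞)
    (hq1 : ∀ v : ℕ, ∑ d ∈ Finset.range (v + 1), q v d = 1) {m : ℕ} (n : ℕ)
    (F : SimpleGraph (Fin m)) :
    ∫ ω, (homCount F (graphOf ω) : ℝ) / (n : ℝ) ^ m ∂(con1Measure n q)
      = (∑ φ : Fin m → Fin n, (con1Measure n q).real
          {ω | ∀ i j, F.Adj i j → (graphOf ω).Adj (φ i) (φ j)}) / (n : ℝ) ^ m := by
  classical
  have := con1_prob q hq1 n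
  rw [integral_div]
  congr 1
  have h : ∀ ω : Fin n → Finset (Fin n), (homCount F (graphOf ω) : ℝ) =
      ∑ φ : Fin m → Fin n, Set.indicator
        {ω | ∀ i j, F.Adj i j → (graphOf ω).Adj (φ i) (φ j)} (fun _ => (1 : ℝ)) ω := by
    intro ω
    rw [homCount, Nat.card_eq_fintype_card, Fintype.card_subtype, Finset.card_filter]
    push_cast
    refine Finset.sum_congr rfl fun φ _ => ?_
    simp [Set.indicator_apply]
  simp_rw [h]
  rw [integral_finsetSum]
  · refine Finset.sum_congr rfl fun φ _ => ?_
    rw [integral_indicator (MeasurableSet.of_discrete)]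
    simp
  · intro φ _
    exact (integrable_const _).indicator (MeasurableSet.of_discrete)

lemma sum_coord {m : ℕ} (n : ℕ) (hn : 0 < n) (e : ℕ → ℝ) (j : Fin m) :
    (∑ φ : Fin m → Fin n, e (φ j)) / (n : ℝ) ^ m
      = (n : ℝ)⁻¹ * ∑ v ∈ Finset.range n, e v := by
  classical
  have h := Fintype.prod_sum (fun (i : Fin m) (v : Fin n) => if i = j then e v else 1)
  have h1 : ∀ φ : Fin m → Fin n, ∏ i, (if i = j then e (φ i) else 1) = e (φ j) := by
    intro φ
    rw [Finset.prod_ite_eq' Finset.univ j (fun i => e (φ i))]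
    simp
  simp only [h1] at h
  rw [← h, Fintype.prod_eq_mul_prod_compl j]
  have h2 : ∏ i ∈ ({j}ᶜ : Finset (Fin m)), ∑ v : Fin n, (if i = j then e v else 1)
      = (n : ℝ) ^ (m - 1) := by
    rw [Finset.prod_congr rfl (g := fun _ => (n : ℝ))]
    · rw [Finset.prod_const, Finset.card_compl]; simp
    · intro i hi
      have : i ≠ j := by simpa using hi
      simp [this]
  rw [h2]
  simp only [if_true]
  rw [Fin.sum_univ_eq_sum_range (fun v => e v) n]
  have hm : m = (m - 1) + 1 := by have := j.2; omega
  have : (n : ℝ) ^ m = (n : ℝ) ^ (m - 1) * n := by rw [← pow_succ, ← hm]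
  rw [this]
  have : (n : ℝ) ≠ 0 := by exact_mod_cast hn.ne'
  field_simp

lemma sum_inj {m n : ℕ} (F : SimpleGraph (Fin m)) (M : ℕ → ℝ) [DecidablePred
    (Function.Injective : (Fin m → Fin n) → Prop)] :
    ∑ φ : Fin m → Fin n with Function.Injective φ, ∏ j, M (dd F φ j)
      = (n.descFactorial m : ℝ) * ((1 / (Nat.factorial m : ℝ)) *
        ∑ σ : Equiv.Perm (Fin m), ∏ j : Fin m, M (indeg (relabel σ F) j)) := by
  classical
  set S := Finset.univ.filter (Function.Injective : (Fin m → Fin n) → Prop)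
  set g : (Fin m → Fin n) → ℝ := fun φ => ∏ j, M (dd F φ j) with hg
  set T := ∑ σ : Equiv.Perm (Fin m), ∏ j : Fin m, M (indeg (relabel σ F) j)
  have h1 : ∀ σ : Equiv.Perm (Fin m), ∑ φ ∈ S, g (φ ∘ σ) = ∑ φ ∈ S, g φ := by
    intro σ
    refine Finset.sum_bij' (fun φ _ => φ ∘ σ) (fun φ _ => φ ∘ σ.symm) ?_ ?_ ?_ ?_ ?_
    · intro φ hφ
      simp only [S, Finset.mem_filter, Finset.mem_univ, true_and] at hφ ⊢
      exact hφ.comp σ.injective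
    · intro φ hφ
      simp only [S, Finset.mem_filter, Finset.mem_univ, true_and] at hφ ⊢
      exact hφ.comp σ.symm.injective
    · intro φ _; ext; simp
    · intro φ _; ext; simp
    · intro φ _; rfl
  have h2 : ∀ ψ : Fin m → Fin n, StrictMono ψ → ∀ σ : Equiv.Perm (Fin m),
      g (ψ ∘ σ) = ∏ j : Fin m, M (indeg (relabel σ F) j) := by
    intro ψ hψ σ
    rw [← Equiv.prod_comp σ]
    refine Finset.prod_congr rfl fun j _ => ?_
    congr 1
    rw [dd, indeg, Nat.card_eq_fintype_card, Fintype.card_subtype]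
    refine Finset.card_bij' (fun i _ => σ i) (fun i _ => σ.symm i) ?_ ?_ ?_ ?_
    · intro i hi
      simpa [relabel, hψ.lt_iff_lt] using hi
    · intro i hi
      simpa [relabel, hψ.lt_iff_lt] using hi
    · simp
    · simp
  have h3 : ∀ φ ∈ S, ∑ σ : Equiv.Perm (Fin m), g (φ ∘ σ) = T := by
    intro φ hφ
    simp only [S, Finset.mem_filter, Finset.mem_univ, true_and] at hφ
    have hmono : StrictMono (φ ∘ Tuple.sort φ) :=
      (Tuple.monotone_sort φ).strictMono_of_injective (hφ.comp (Tuple.sort φ).injective)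
    rw [← Equiv.sum_comp (Equiv.mulLeft (Tuple.sort φ))]
    refine Finset.sum_congr rfl fun σ _ => ?_
    rw [← h2 _ hmono σ]
    rfl
  have hcard : (S.card : ℝ) = n.descFactorial m := by
    have : S.card = n.descFactorial m := by
      have h := Fintype.card_embedding_eq (α := Fin m) (β := Fin n)
      rw [Fintype.card_fin, Fintype.card_fin] at h
      rw [← h, ← Fintype.card_subtype]
      exact Fintype.card_congr (Equiv.subtypeInjectiveEquivEmbedding _ _)
    exact_mod_cast this
  have h4 : (Nat.factorial m : ℝ) * ∑ φ ∈ S, g φ = n.descFactorial m * T := by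
    calc (Nat.factorial m : ℝ) * ∑ φ ∈ S, g φ
        = ∑ σ : Equiv.Perm (Fin m), ∑ φ ∈ S, g (φ ∘ σ) := by
          rw [Finset.sum_congr rfl (fun σ _ => h1 σ)]
          simp [Fintype.card_perm]
      _ = ∑ φ ∈ S, ∑ σ : Equiv.Perm (Fin m), g (φ ∘ σ) := Finset.sum_comm
      _ = ∑ φ ∈ S, T := Finset.sum_congr rfl h3
      _ = n.descFactorial m * T := by simp [hcard]
  have hf : (Nat.factorial m : ℝ) ≠ 0 := by exact_mod_cast (Nat.factorial_pos m).ne'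
  field_simp
  linarith

lemma card_inj (m n : ℕ) [DecidablePred (Function.Injective : (Fin m → Fin n) → Prop)] :
    (Finset.univ.filter (Function.Injective : (Fin m → Fin n) → Prop)).card
      = n.descFactorial m := by
  have h := Fintype.card_embedding_eq (α := Fin m) (β := Fin n)
  rw [Fintype.card_fin, Fintype.card_fin] at h
  rw [← h, ← Fintype.card_subtype]
  exact Fintype.card_congr (Equiv.subtypeInjectiveEquivEmbedding _ _)

lemma desc_tendsto (m : ℕ) :
    Tendsto (fun n : ℕ => (n.descFactorial m : ℝ) / (n : ℝ) ^ m) atTop (nhds 1) := by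
  have h := isEquivalent_descFactorial m
  refine (Asymptotics.isEquivalent_iff_tendsto_one ?_).1 h
  filter_upwards [eventually_gt_atTop 0] with n hn
  have : (0 : ℝ) < n := by exact_mod_cast hn
  positivity

/-- Suppose the indegree distributions of Construction 1 satisfy
`D_n/n → ν` in distribution (here `q (n-1)` is the indegree distribution `ν_n` of the
`n`-th vertex, which has `n−1` predecessors). Then for every graph `F` on `{1,…,m}`,
`E[t(F, G_n)] → t_F = (1/m!) Σ_σ ∏_j M_{d_j(F_σ)}`, where `t(F,G) = n(F,G)/n^m` and
`M_d = ∫₀¹ x^d dν(x)`. -/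
theorem stmt9 (ν : Measure ℝ) [IsProbabilityMeasure ν] (hν : ν (Set.Icc 0 1) = 1)
    (q : ℕ → ℕ → ℝ≥0∞)
    (hq1 : ∀ v : ℕ, ∑ d ∈ Finset.range (v + 1), q v d = 1)
    (hq0 : ∀ v d : ℕ, v < d → q v d = 0)
    (hconv : ∀ f : BoundedContinuousFunction ℝ ℝ,
      Tendsto (fun k => ∑ d ∈ Finset.range k, (q (k - 1) d).toReal * f ((d : ℝ) / k))
        atTop (nhds (∫ x, f x ∂ν)))
    (m : ℕ) (F : SimpleGraph (Fin m)) :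
    Tendsto
      (fun n => ∫ ω, (homCount F (graphOf ω) : ℝ) / (n : ℝ) ^ m ∂(con1Measure n q))
      atTop
      (nhds ((1 / (Nat.factorial m : ℝ)) *
        ∑ σ : Equiv.Perm (Fin m), ∏ j : Fin m, ∫ x, x ^ (indeg (relabel σ F) j) ∂ν)) := by

  classical
  set M : ℕ → ℝ := fun d => ∫ x, x ^ d ∂ν with hM
  have hpt : ∀ d, Tendsto (fun v => pp q d v) atTop (nhds (M d)) :=
    fun d => pp_tendsto ν hν q hq1 hconv d
  have hM01 : ∀ d, 0 ≤ M d ∧ M d ≤ 1 := fun d =>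
    ⟨ge_of_tendsto' (hpt d) (fun v => pp_nonneg q d v),
      le_of_tendsto' (hpt d) (fun v => pp_le_one q hq1 d v)⟩
  set T : ℝ := (1 / (Nat.factorial m : ℝ)) *
        ∑ σ : Equiv.Perm (Fin m), ∏ j : Fin m, M (indeg (relabel σ F) j) with hT
  change Tendsto _ atTop (nhds T)
  obtain ⟨e, hedef⟩ : ∃ e : ℕ → ℝ, e = fun v => ∑ d ∈ Finset.range (m + 1), |pp q d v - M d| := ⟨_, rfl⟩
  have he : Tendsto e atTop (nhds 0) := by
    have : Tendsto e atTop (nhds (∑ d ∈ Finset.range (m + 1), |M d - M d|)) :=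
      by rw [hedef]; exact tendsto_finsetSum _ fun d _ => ((hpt d).sub_const (M d)).abs
    simpa using this
  have he0 : ∀ v, 0 ≤ e v := fun v => by
    rw [hedef]; exact Finset.sum_nonneg fun _ _ => abs_nonneg _
  have hces := he.cesaro
  have hbound : ∀ n : ℕ, 0 < n →
      |∫ ω, (homCount F (graphOf ω) : ℝ) / (n : ℝ) ^ m ∂(con1Measure n q)
        - (n.descFactorial m : ℝ) / (n : ℝ) ^ m * T|
      ≤ (1 - (n.descFactorial m : ℝ) / (n : ℝ) ^ m)
        + m * ((n : ℝ)⁻¹ * ∑ v ∈ Finset.range n, e v) := by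
    intro n hn
    have := con1_prob q hq1 n
    have hnp : (0 : ℝ) < (n : ℝ) ^ m := by
      have : (0 : ℝ) < n := by exact_mod_cast hn
      positivity
    rw [integral_eq q hq1 n F]
    set P : (Fin m → Fin n) → ℝ := fun φ => (con1Measure n q).real
          {ω | ∀ i j, F.Adj i j → (graphOf ω).Adj (φ i) (φ j)} with hP
    have hs := sum_inj (n := n) F M
    rw [← hT] at hs
    rw [div_mul_eq_mul_div, ← hs, ← sub_div, abs_div, abs_of_pos hnp]
    have hsplit := Finset.sum_filter_add_sum_filter_not Finset.univ
      (Function.Injective : (Fin m → Fin n) → Prop) P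
    rw [← hsplit]
    have hA : |∑ φ : Fin m → Fin n with Function.Injective φ, P φ
        - ∑ φ : Fin m → Fin n with Function.Injective φ, ∏ j, M (dd F φ j)|
        ≤ ∑ φ : Fin m → Fin n, ∑ j, e (φ j) := by
      rw [← Finset.sum_sub_distrib]
      refine (Finset.abs_sum_le_sum_abs _ _).trans ?_
      have hsub : ∑ φ : Fin m → Fin n with Function.Injective φ, ∑ j, e (φ j)
          ≤ ∑ φ : Fin m → Fin n, ∑ j, e (φ j) :=
        Finset.sum_le_sum_of_subset_of_nonneg (Finset.filter_subset _ _)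
          (fun φ _ _ => Finset.sum_nonneg fun j _ => he0 _)
      refine le_trans (Finset.sum_le_sum ?_) hsub
      intro φ hφ
      simp only [Finset.mem_filter, Finset.mem_univ, true_and] at hφ
      have : P φ = ∏ j, pp q (dd F φ j) (φ j) := hom_prob q hq1 F φ hφ
      rw [this]
      refine (abs_prod_diff Finset.univ (fun j => pp q (dd F φ j) (φ j))
        (fun j => M (dd F φ j)) (fun j _ => ⟨pp_nonneg _ _ _, pp_le_one q hq1 _ _⟩)
        (fun j _ => hM01 _)).trans ?_
      refine Finset.sum_le_sum fun j _ => ?_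
      rw [hedef]
      exact Finset.single_le_sum (f := fun d => |pp q d (φ j) - M d|)
        (fun _ _ => abs_nonneg _)
        (Finset.mem_range.2 (Nat.lt_succ_of_le (dd_le F φ j)))
    have hBn : 0 ≤ ∑ φ : Fin m → Fin n with ¬ Function.Injective φ, P φ :=
      Finset.sum_nonneg fun _ _ => measureReal_nonneg
    have hB : ∑ φ : Fin m → Fin n with ¬ Function.Injective φ, P φ
        ≤ (n : ℝ) ^ m - n.descFactorial m := by
      have h1 : ∑ φ : Fin m → Fin n with ¬ Function.Injective φ, P φ
          ≤ ∑ φ : Fin m → Fin n with ¬ Function.Injective φ, (1 : ℝ) :=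
        Finset.sum_le_sum fun _ _ => measureReal_le_one
      have h2 := Finset.card_filter_add_card_filter_not (s := Finset.univ)
        (Function.Injective : (Fin m → Fin n) → Prop)
      rw [card_inj] at h2
      simp only [Finset.card_univ, Fintype.card_fun, Fintype.card_fin] at h2
      have h3 : ((n.descFactorial m : ℝ)) + ((Finset.univ.filter
        (fun φ : Fin m → Fin n => ¬ Function.Injective φ)).card : ℝ) = (n : ℝ) ^ m := by
        exact_mod_cast h2
      rw [Finset.sum_const, nsmul_eq_mul, mul_one] at h1
      linarith
    have hC : (∑ φ : Fin m → Fin n, ∑ j, e (φ j)) / (n : ℝ) ^ m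
        = m * ((n : ℝ)⁻¹ * ∑ v ∈ Finset.range n, e v) := by
      rw [Finset.sum_comm, Finset.sum_div,
        Finset.sum_congr rfl (fun j _ => sum_coord n hn e j)]
      simp
    rw [← hC, ← div_self hnp.ne', ← sub_div, ← add_div]
    refine div_le_div_of_nonneg_right ?_ hnp.le
    rw [abs_le] at hA ⊢
    constructor <;> linarith [hA.1, hA.2]
  have hd := desc_tendsto m
  have h0 : Tendsto (fun n : ℕ => (1 - (n.descFactorial m : ℝ) / (n : ℝ) ^ m)
        + m * ((n : ℝ)⁻¹ * ∑ v ∈ Finset.range n, e v)) atTop (nhds 0) := by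
    simpa using (hd.const_sub 1).add (hces.const_mul (m : ℝ))
  have h1 : Tendsto (fun n : ℕ =>
      ∫ ω, (homCount F (graphOf ω) : ℝ) / (n : ℝ) ^ m ∂(con1Measure n q)
        - (n.descFactorial m : ℝ) / (n : ℝ) ^ m * T) atTop (nhds 0) := by
    refine squeeze_zero_norm' ?_ h0
    filter_upwards [eventually_gt_atTop 0] with n hn
    exact hbound n hn
  simpa using h1.add (hd.mul_const T)
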